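/- Let n be a positive integer, 0 < α < n, and p ≤ (n+α)/(n−α). Suppose u is a positive function on ℝⁿ, continuous on ℝⁿ \ {x⁰}, unbounded in every neighborhood of x⁰, and satisfying u(x) = ∫_{ℝⁿ} |x−y|^{−(n−α)} u(y)^p dy for all x ≠ x⁰. Then u is radially symmetric about x⁰; that is, u(x) depends only on |x − x⁰|. -/

import Mathlib

open MeasureTheory


namespace RadSym
open Metric Set Filter Topology EuclideanGeometry

abbrev ES (n : ℕ) := EuclideanSpace ℝ (Fin n)

lemma ker_int {n : ℕ} (hn : 0 < n) {γ : ℝ} (hγ : γ < n) (R : ℝ) :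
    IntegrableOn (fun z : ES n => ‖z‖ ^ (-γ)) (ball 0 R) := by
  refine integrableOn_ball_of_norm_le_rpow (C := 1) (α := γ) (by simpa using Nat.succ_le_of_lt hn) (by simpa using hγ)
    ?_ ?_
  · filter_upwards with x
    rw [one_mul, Real.norm_of_nonneg (by positivity)]
  · exact (measurable_norm.pow_const _).aestronglyMeasurable

lemma small_ker {n : ℕ} (hn : 0 < n) {γ : ℝ} (hγ0 : 0 < γ) (hγ : γ < n) {ε : ℝ} (hε : 0 < ε) :
    ∃ δ : ENNReal, 0 < δ ∧ ∀ s : Set (ES n), volume s < δ → ∀ y : ES n,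
      ∫⁻ z in s, ENNReal.ofReal (dist y z ^ (-γ)) < ENNReal.ofReal ε := by
  have h1 := (ker_int hn hγ 1)
  have h2 : ∫⁻ z : ES n, (ball 0 1).indicator (fun z => ENNReal.ofReal (‖z‖ ^ (-γ))) z ≠ ⊤ := by
    rw [lintegral_indicator measurableSet_ball]
    exact h1.lintegral_lt_top.ne
  obtain ⟨δ, hδ, H⟩ := exists_pos_setLIntegral_lt_of_measure_lt (μ := (volume : Measure (ES n))) h2
    (ε := ENNReal.ofReal (ε / 2)) (by simpa using hε)
  refine ⟨min δ (ENNReal.ofReal (ε / 2)), by simp [hδ, hε], fun s hs y => ?_⟩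
  have hs1 := lt_of_lt_of_le hs (min_le_left _ _)
  have hs2 := lt_of_lt_of_le hs (min_le_right _ _)
  have hmp : MeasurePreserving (fun z : ES n => y - z) volume volume :=
    Measure.measurePreserving_sub_left volume y
  have hemb : MeasurableEmbedding (fun z : ES n => y - z) :=
    (Homeomorph.subLeft y).measurableEmbedding
  set t : Set (ES n) := (fun z : ES n => y - z) ⁻¹' s with ht
  have hvt : volume t = volume s := hmp.measure_preimage_emb hemb s
  have hst : ∫⁻ z in s, ENNReal.ofReal (dist y z ^ (-γ)) = ∫⁻ z in t, ENNReal.ofReal (‖z‖ ^ (-γ)) := by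
    rw [ht, ← hmp.setLIntegral_comp_preimage_emb hemb]
    congr 1; ext z
    simp
  rw [hst]
  calc ∫⁻ z in t, ENNReal.ofReal (‖z‖ ^ (-γ))
      ≤ ∫⁻ z in t, ((ball 0 1).indicator (fun z => ENNReal.ofReal (‖z‖ ^ (-γ))) z + 1) := by
        apply lintegral_mono
        intro z
        by_cases hz : z ∈ ball (0 : ES n) 1
        · simp [hz]
        · simp only [hz, not_false_eq_true, indicator_of_notMem, zero_add]
          have : 1 ≤ ‖z‖ := by simpa using hz
          exact ENNReal.ofReal_le_one.2 (Real.rpow_le_one_of_one_le_of_nonpos this (by linarith))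
    _ = (∫⁻ z in t, (ball 0 1).indicator (fun z => ENNReal.ofReal (‖z‖ ^ (-γ))) z) + volume t := by
        rw [lintegral_add_right _ measurable_const]; simp
    _ < ENNReal.ofReal (ε / 2) + ENNReal.ofReal (ε / 2) := by
        apply ENNReal.add_lt_add
        · exact H t (hvt ▸ hs1)
        · rw [hvt]; exact hs2
    _ = ENNReal.ofReal ε := by
        rw [← ENNReal.ofReal_add (by positivity) (by positivity)]; congr 1; ring

lemma image_inv {n : ℕ} (c : ES n) {l : ℝ} (hl : 0 < l) :
    inversion c l '' (ball c l \ {c}) = (closedBall c l)ᶜ := by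
  ext w
  constructor
  · rintro ⟨z, ⟨hz, hzc⟩, rfl⟩
    have hzc' : 0 < dist z c := dist_pos.2 hzc
    have hz' : dist z c < l := hz
    simp only [mem_compl_iff, mem_closedBall, not_le, dist_inversion_center]
    rw [lt_div_iff₀ hzc']; nlinarith
  · intro hw
    have hw' : l < dist w c := by simpa using hw
    refine ⟨inversion c l w, ⟨?_, ?_⟩, inversion_inversion c hl.ne' w⟩
    · simp only [mem_ball, dist_inversion_center]
      rw [div_lt_iff₀ (by linarith)]; nlinarith
    · simp only [mem_singleton_iff, inversion_eq_center hl.ne']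
      rintro rfl
      simp at hw'; linarith

lemma det_inv {n : ℕ} (c z : ES n) (l : ℝ) :
    |((l / dist z c) ^ 2 • ((Submodule.span ℝ {z - c})ᗮ.reflection : ES n →L[ℝ] ES n)).det|
      = (l / dist z c) ^ (2 * n) := by
  have h := Submodule.det_reflection (𝕜 := ℝ) (Submodule.span ℝ {z - c})ᗮ
  rw [ContinuousLinearMap.det]
  rw [ContinuousLinearMap.toLinearMap_smul, LinearMap.det_smul]
  have h2 : LinearMap.det (((Submodule.span ℝ {z - c})ᗮ.reflection : ES n →L[ℝ] ES n) : ES n →ₗ[ℝ] ES n)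
     = (-1) ^ (Module.finrank ℝ ((Submodule.span ℝ {z - c})ᗮᗮ : Submodule ℝ (ES n))) := h
  rw [h2]
  rw [abs_mul, abs_pow (-1 : ℝ)]
  simp [pow_mul]

lemma inv_integrable {n : ℕ} (c : ES n) {l : ℝ} (hl : 0 < l) (F : ES n → ℝ) :
    IntegrableOn F (closedBall c l)ᶜ ↔
    IntegrableOn (fun z => (l / dist z c) ^ (2 * n) * F (inversion c l z)) (ball c l \ {c}) := by
  rw [← image_inv c hl]
  rw [integrableOn_image_iff_integrableOn_abs_det_fderiv_smul volume
    (measurableSet_ball.diff (measurableSet_singleton c))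
    (fun z hz => (hasFDerivAt_inversion hz.2).hasFDerivWithinAt)
    (inversion_injective c hl.ne').injOn]
  simp_rw [det_inv, smul_eq_mul]

lemma inv_integral {n : ℕ} (c : ES n) {l : ℝ} (hl : 0 < l) (F : ES n → ℝ) :
    ∫ z in (closedBall c l)ᶜ, F z =
    ∫ z in (ball c l \ {c}), (l / dist z c) ^ (2 * n) * F (inversion c l z) := by
  rw [← image_inv c hl]
  rw [integral_image_eq_integral_abs_det_fderiv_smul volume
    (measurableSet_ball.diff (measurableSet_singleton c))
    (fun z hz => (hasFDerivAt_inversion hz.2).hasFDerivWithinAt)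
    (inversion_injective c hl.ne').injOn]
  simp_rw [det_inv, smul_eq_mul]

end RadSym


namespace RadSym
open Metric Set Filter Topology EuclideanGeometry

structure Sol (n : ℕ) (γ p : ℝ) (x0 : ES n) (u : ES n → ℝ) : Prop where
  hn : 0 < n
  γ0 : 0 < γ
  γn : γ < n
  hp : γ * p ≤ 2 * n - γ
  pos : ∀ x, 0 < u x
  cont : ContinuousOn u {x0}ᶜ
  sing : ∀ ε > (0 : ℝ), ∀ M : ℝ, ∃ x ∈ Metric.ball x0 ε, M < u x
  int : ∀ x, x ≠ x0 → Integrable (fun y => dist x y ^ (-γ) * u y ^ p)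
  eq : ∀ x, x ≠ x0 → u x = ∫ y, dist x y ^ (-γ) * u y ^ p

/-- The Kelvin transform of `u`. -/
noncomputable def V {n : ℕ} (γ : ℝ) (u : ES n → ℝ) (c : ES n) (l : ℝ) (z : ES n) : ℝ :=
  (l / dist z c) ^ γ * u (inversion c l z)

lemma split_int {n : ℕ} (hn : 0 < n) (c : ES n) {l : ℝ} (hl : 0 < l) {F : ES n → ℝ}
    (hF : Integrable F) :
    IntegrableOn (fun z => (l / dist z c) ^ (2 * n) * F (inversion c l z)) (ball c l \ {c}) ∧
    ∫ z, F z = (∫ z in (ball c l \ {c}), F z) +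
      ∫ z in (ball c l \ {c}), (l / dist z c) ^ (2 * n) * F (inversion c l z) := by
  have : Nonempty (Fin n) := ⟨⟨0, hn⟩⟩
  refine ⟨(inv_integrable c hl F).1 hF.integrableOn, ?_⟩
  rw [← inv_integral c hl F, ← integral_add_compl (s := closedBall c l) measurableSet_closedBall hF]
  congr 1
  apply setIntegral_congr_set
  have h1 : (ball c l \ {c} : Set (ES n)) =ᵐ[volume] ball c l :=
    sdiff_null_ae_eq_self (measure_singleton c)
  have h2 : (ball c l : Set (ES n)) =ᵐ[volume] closedBall c l := by
    refine ae_eq_of_subset_of_measure_ge ball_subset_closedBall ?_ measurableSet_ball.nullMeasurableSet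
      measure_closedBall_lt_top.ne
    rw [Measure.addHaar_closedBall_eq_addHaar_ball]
  exact (h1.trans h2).symm

lemma dist_inv' {n : ℕ} {c y z : ES n} {l : ℝ} (hl : 0 < l) (hy : y ≠ c) (hz : z ≠ c) :
    dist (inversion c l y) z = dist z c / dist y c * dist y (inversion c l z) := by
  have hry := dist_pos.2 hy
  have hrz := dist_pos.2 hz
  have h := dist_inversion_inversion hy ((inversion_eq_center hl.ne').not.2 hz) l
  rw [inversion_inversion c hl.ne', dist_inversion_center] at h
  rw [h]
  field_simp

lemma alg1 {n : ℕ} {c y z : ES n} {l γ : ℝ} (hl : 0 < l) (hy : y ≠ c) (hz : z ≠ c) :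
    (l / dist z c) ^ (2 * n) * dist y (inversion c l z) ^ (-γ) =
    (l / dist y c) ^ γ * dist (inversion c l y) z ^ (-γ) * (l / dist z c) ^ (2 * (n : ℝ) - γ) := by
  have hry := dist_pos.2 hy
  have hrz := dist_pos.2 hz
  rw [dist_inv' hl hy hz, Real.mul_rpow (by positivity) (by positivity)]
  have e : dist z c / dist y c = (l / dist y c) / (l / dist z c) := by field_simp
  rw [e]
  generalize hD : dist y (inversion c l z) ^ (-γ) = D
  have ha : 0 < l / dist y c := by positivity
  have hb : 0 < l / dist z c := by positivity
  generalize l / dist y c = a at *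
  generalize l / dist z c = b at *
  rw [Real.div_rpow ha.le hb.le, Real.rpow_sub hb, Real.rpow_neg ha.le, Real.rpow_neg hb.le,
    show (2 * (n : ℝ)) = ((2 * n : ℕ) : ℝ) by push_cast; rfl, Real.rpow_natCast]
  have := (Real.rpow_pos_of_pos ha γ).ne'
  have := (Real.rpow_pos_of_pos hb γ).ne'
  field_simp

lemma alg2 {n : ℕ} {c y z : ES n} {l γ : ℝ} (hl : 0 < l) (hy : y ≠ c) (hz : z ≠ c) :
    (l / dist z c) ^ (2 * n) * ((l / dist y c) ^ γ * dist (inversion c l y) (inversion c l z) ^ (-γ)) =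
    dist y z ^ (-γ) * (l / dist z c) ^ (2 * (n : ℝ) - γ) := by
  have hry := dist_pos.2 hy
  have hrz := dist_pos.2 hz
  rw [dist_inversion_inversion hy hz, Real.mul_rpow (by positivity) (by positivity)]
  have e : l ^ 2 / (dist y c * dist z c) = (l / dist y c) * (l / dist z c) := by field_simp
  rw [e]
  generalize hD : dist y z ^ (-γ) = D
  have ha : 0 < l / dist y c := by positivity
  have hb : 0 < l / dist z c := by positivity
  generalize l / dist y c = a at *
  generalize l / dist z c = b at *
  rw [Real.mul_rpow ha.le hb.le, Real.rpow_sub hb, Real.rpow_neg ha.le, Real.rpow_neg hb.le,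
    show (2 * (n : ℝ)) = ((2 * n : ℕ) : ℝ) by push_cast; rfl, Real.rpow_natCast]
  have := (Real.rpow_pos_of_pos ha γ).ne'
  have := (Real.rpow_pos_of_pos hb γ).ne'
  field_simp

/-- difference kernel -/
noncomputable def D {n : ℕ} (γ : ℝ) (c : ES n) (l : ℝ) (y z : ES n) : ℝ :=
  dist y z ^ (-γ) - (l / dist y c) ^ γ * dist (inversion c l y) z ^ (-γ)

noncomputable def G {n : ℕ} (γ p : ℝ) (u : ES n → ℝ) (c : ES n) (l : ℝ) (z : ES n) : ℝ :=
  (l / dist z c) ^ (2 * (n : ℝ) - γ) * u (inversion c l z) ^ p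

lemma repr {n : ℕ} {γ p : ℝ} {x0 : ES n} {u : ES n → ℝ} (S : Sol n γ p x0 u)
    {c : ES n} {l : ℝ} (hl : 0 < l) (hlx : l < dist x0 c) {y : ES n} (hy : y ∈ ball c l)
    (hyc : y ≠ c) (hI : inversion c l y ≠ x0) :
    IntegrableOn (fun z => D γ c l y z * (u z ^ p - G γ p u c l z)) (ball c l \ {c}) ∧
    u y - V γ u c l y = ∫ z in ball c l \ {c}, D γ c l y z * (u z ^ p - G γ p u c l z) := by
  have hyx : y ≠ x0 := by
    rintro rfl
    exact absurd (mem_ball.1 hy) (not_lt.2 hlx.le)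
  have hmS : MeasurableSet (ball c l \ {c} : Set (ES n)) :=
    measurableSet_ball.diff (measurableSet_singleton c)
  have hF1 := S.int y hyx
  have hF2 := (S.int _ hI).const_mul ((l / dist y c) ^ γ)
  obtain ⟨i1, e1⟩ := split_int S.hn c hl hF1
  obtain ⟨i2, e2⟩ := split_int S.hn c hl hF2
  rw [integral_const_mul, ← S.eq _ hI] at e2
  rw [← S.eq _ hyx] at e1
  have c1 : EqOn (fun z => (l / dist z c) ^ (2 * n) * (dist y (inversion c l z) ^ (-γ) * u (inversion c l z) ^ p))
    (fun z => (l / dist y c) ^ γ * dist (inversion c l y) z ^ (-γ) * G γ p u c l z) (ball c l \ {c}) := by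
    intro z hz
    have := alg1 (γ := γ) hl hyc (z := z) hz.2
    simp only [G]
    rw [← mul_assoc, this]; ring
  have c2 : EqOn (fun z => (l / dist z c) ^ (2 * n) * ((l / dist y c) ^ γ * (dist (inversion c l y) (inversion c l z) ^ (-γ) * u (inversion c l z) ^ p)))
    (fun z => dist y z ^ (-γ) * G γ p u c l z) (ball c l \ {c}) := by
    intro z hz
    have := alg2 (γ := γ) hl hyc (z := z) hz.2
    simp only [G]
    rw [← mul_assoc (dist y z ^ (-γ)), ← this]; ring
  rw [setIntegral_congr_fun hmS c1] at e1
  rw [setIntegral_congr_fun hmS c2] at e2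
  replace i1 := i1.congr_fun c1 hmS
  replace i2 := i2.congr_fun c2 hmS
  have j1 := hF1.integrableOn (s := ball c l \ {c})
  have j2 := hF2.integrableOn (s := ball c l \ {c})
  have key : ∀ z, D γ c l y z * (u z ^ p - G γ p u c l z) =
      (dist y z ^ (-γ) * u z ^ p + (l / dist y c) ^ γ * dist (inversion c l y) z ^ (-γ) * G γ p u c l z) -
      ((l / dist y c) ^ γ * (dist (inversion c l y) z ^ (-γ) * u z ^ p) + dist y z ^ (-γ) * G γ p u c l z) := by
    intro z; simp only [D]; ring
  simp_rw [key]
  refine ⟨(j1.add i1).sub (j2.add i2), ?_⟩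
  have t1 := integral_sub (j1.add i1) (j2.add i2)
  have t2 := integral_add j1 i1
  have t3 := integral_add j2 i2
  simp only [Pi.add_apply] at t1 t2 t3
  rw [t1, t2, t3, ← e1, ← e2, V]

lemma D_pos {n : ℕ} {γ : ℝ} (hγ : 0 < γ) {c : ES n} {l : ℝ} (hl : 0 < l) {y z : ES n}
    (hy : y ∈ ball c l) (hyc : y ≠ c) (hz : z ∈ ball c l) (hzy : z ≠ y) : 0 < D γ c l y z := by
  have hry := dist_pos.2 hyc
  have hD : 0 < dist y z := dist_pos.2 hzy.symm
  have hyl : dist y c < l := hy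
  have hzl : dist z c < l := hz
  have key : dist y z ^ 2 < (dist y c / l * dist (inversion c l y) z) ^ 2 := by
    have hI : dist (inversion c l y) z = ‖(l / dist y c) ^ 2 • (y - c) - (z - c)‖ := by
      rw [dist_eq_norm, inversion]; congr 1
      simp only [vsub_eq_sub, vadd_eq_add]; abel
    have e1 : dist y z ^ 2 = dist y c ^ 2 - 2 * inner ℝ (y - c) (z - c) + dist z c ^ 2 := by
      rw [dist_eq_norm, dist_eq_norm, dist_eq_norm, ← norm_sub_sq_real]; congr 2; abel
    have e2 : dist (inversion c l y) z ^ 2 = ((l / dist y c) ^ 2) ^ 2 * dist y c ^ 2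
        - 2 * ((l / dist y c) ^ 2 * inner ℝ (y - c) (z - c)) + dist z c ^ 2 := by
      rw [hI, norm_sub_sq_real, norm_smul, mul_pow, inner_smul_left, ← dist_eq_norm, ← dist_eq_norm]
      simp [abs_of_pos hl]
    rw [mul_pow, e1, e2]
    have : (dist y c / l) ^ 2 * (((l / dist y c) ^ 2) ^ 2 * dist y c ^ 2
        - 2 * ((l / dist y c) ^ 2 * inner ℝ (y - c) (z - c)) + dist z c ^ 2) -
        (dist y c ^ 2 - 2 * inner ℝ (y - c) (z - c) + dist z c ^ 2)
        = (l ^ 2 - dist y c ^ 2) * (l ^ 2 - dist z c ^ 2) / l ^ 2 := by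
      field_simp; ring
    have h1 : 0 < l ^ 2 - dist y c ^ 2 := by nlinarith
    have h2 : 0 < l ^ 2 - dist z c ^ 2 := by nlinarith [dist_nonneg (x := z) (y := c)]
    have : 0 < (l ^ 2 - dist y c ^ 2) * (l ^ 2 - dist z c ^ 2) / l ^ 2 := by positivity
    linarith
  have key2 : dist y z < dist y c / l * dist (inversion c l y) z :=
    lt_of_pow_lt_pow_left₀ 2 (by positivity) key
  have : (l / dist y c) ^ γ * dist (inversion c l y) z ^ (-γ) =
      (dist y c / l * dist (inversion c l y) z) ^ (-γ) := by
    rw [Real.mul_rpow (by positivity) (by positivity), Real.rpow_neg (by positivity : 0 ≤ dist y c / l),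
      ← Real.inv_rpow (by positivity), inv_div]
  rw [D, this, sub_pos]
  exact Real.rpow_lt_rpow_of_neg hD key2 (by linarith)

lemma D_le {n : ℕ} {γ : ℝ} {c : ES n} {l : ℝ} (hl : 0 < l) {y z : ES n} :
    D γ c l y z ≤ dist y z ^ (-γ) := by
  rw [D]
  have : 0 ≤ (l / dist y c) ^ γ * dist (inversion c l y) z ^ (-γ) := by positivity
  linarith

lemma V_pos {n : ℕ} {γ p : ℝ} {x0 : ES n} {u : ES n → ℝ} (S : Sol n γ p x0 u)
    {c : ES n} {l : ℝ} (hl : 0 < l) {z : ES n} (hzc : z ≠ c) : 0 < V γ u c l z := by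
  have := dist_pos.2 hzc
  have := S.pos (inversion c l z)
  rw [V]; positivity

lemma G_ge {n : ℕ} {γ p : ℝ} {x0 : ES n} {u : ES n → ℝ} (S : Sol n γ p x0 u)
    {c : ES n} {l : ℝ} (hl : 0 < l) {z : ES n} (hz : z ∈ ball c l) (hzc : z ≠ c) :
    V γ u c l z ^ p ≤ G γ p u c l z := by
  have hr := dist_pos.2 hzc
  have hu := S.pos (inversion c l z)
  rw [V, G, Real.mul_rpow (by positivity) hu.le, ← Real.rpow_mul (by positivity)]
  gcongr
  · rw [le_div_iff₀ hr, one_mul]; exact (mem_ball.1 hz).le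
  · exact S.hp

end RadSym


namespace RadSym
open Metric Set Filter Topology EuclideanGeometry

variable {n : ℕ} {γ p : ℝ} {x0 : ES n} {u : ES n → ℝ}

lemma Sol.contAt (S : Sol n γ p x0 u) {x : ES n} (hx : x ≠ x0) : ContinuousAt u x :=
  S.cont.continuousAt (isOpen_compl_singleton.mem_nhds hx)

lemma V_cont_l (S : Sol n γ p x0 u) {c z : ES n} {l : ℝ} (hl : 0 < l) (hzc : z ≠ c)
    (hI : inversion c l z ≠ x0) : ContinuousAt (fun l' => V γ u c l' z) l := by
  have hr := dist_pos.2 hzc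
  have h1 : ContinuousAt (fun l' : ℝ => inversion c l' z) l :=
    ContinuousAt.inversion continuousAt_const continuousAt_id continuousAt_const hzc
  have h2 : ContinuousAt (fun l' : ℝ => u (inversion c l' z)) l :=
    ContinuousAt.comp (f := fun l' : ℝ => inversion c l' z) (S.contAt hI) h1
  have h3 : ContinuousAt (fun l' : ℝ => (l' / dist z c) ^ γ) l :=
    (continuousAt_id.div_const _).rpow_const (Or.inl (by simp; exact ⟨hl.ne', hzc⟩))
  exact h3.mul h2

lemma inv_cont_z {c z : ES n} {l : ℝ} (hzc : z ≠ c) :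
    ContinuousAt (fun z => inversion c l z) z :=
  ContinuousAt.inversion continuousAt_const continuousAt_const continuousAt_id hzc

lemma u_inv_cont_z (S : Sol n γ p x0 u) {c z : ES n} {l : ℝ} (hzc : z ≠ c)
    (hI : inversion c l z ≠ x0) : ContinuousAt (fun z => u (inversion c l z)) z :=
  ContinuousAt.comp (f := fun z => inversion c l z) (S.contAt hI) (inv_cont_z hzc)

lemma pow_cont_z {c z : ES n} {l q : ℝ} (hl : 0 < l) (hzc : z ≠ c) :
    ContinuousAt (fun z => (l / dist z c) ^ q) z := by
  have hr := dist_pos.2 hzc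
  refine ContinuousAt.rpow_const ?_ (Or.inl (by positivity))
  exact ContinuousAt.div continuousAt_const (by fun_prop) hr.ne'

lemma V_cont_z (S : Sol n γ p x0 u) {c z : ES n} {l : ℝ} (hl : 0 < l) (hzc : z ≠ c)
    (hI : inversion c l z ≠ x0) : ContinuousAt (fun z => V γ u c l z) z :=
  (pow_cont_z hl hzc).mul (u_inv_cont_z S hzc hI)

lemma G_cont_z (S : Sol n γ p x0 u) {c z : ES n} {l : ℝ} (hl : 0 < l) (hzc : z ≠ c)
    (hI : inversion c l z ≠ x0) : ContinuousAt (fun z => G γ p u c l z) z :=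
  (pow_cont_z hl hzc).mul ((u_inv_cont_z S hzc hI).rpow_const (Or.inl (S.pos _).ne'))

def Good (x0 c : ES n) (l : ℝ) : Set (ES n) := {z | z ∈ ball c l ∧ z ≠ c ∧ inversion c l z ≠ x0}

def Bad (γ : ℝ) (x0 : ES n) (u : ES n → ℝ) (c : ES n) (l : ℝ) : Set (ES n) :=
  {z | z ∈ Good x0 c l ∧ V γ u c l z < u z}

def P (γ : ℝ) (x0 : ES n) (u : ES n → ℝ) (c : ES n) (l : ℝ) : Prop :=
  ∀ z ∈ Good x0 c l, u z ≤ V γ u c l z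

lemma good_nhds {c z : ES n} {l : ℝ} (hz : z ∈ Good x0 c l) : ∀ᶠ w in 𝓝 z, w ∈ Good x0 c l := by
  obtain ⟨h1, h2, h3⟩ := hz
  filter_upwards [isOpen_ball.mem_nhds h1, isOpen_compl_singleton.mem_nhds h2,
    (inv_cont_z (l := l) h2).eventually_ne h3] with w a b d using ⟨a, b, d⟩

lemma good_nhds_l {c z : ES n} {l : ℝ} (hz : z ∈ Good x0 c l) :
    ∀ᶠ l' in 𝓝 l, z ∈ Good x0 c l' := by
  obtain ⟨h1, h2, h3⟩ := hz
  have h4 : ContinuousAt (fun l' : ℝ => inversion c l' z) l :=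
    ContinuousAt.inversion continuousAt_const continuousAt_id continuousAt_const h2
  filter_upwards [lt_mem_nhds (mem_ball.1 h1), h4.eventually_ne h3] with l' a b using ⟨a, h2, b⟩

lemma good_ne {c z : ES n} {l : ℝ} (hlx : l < dist x0 c) (hz : z ∈ Good x0 c l) : z ≠ x0 := by
  rintro rfl
  exact absurd (mem_ball.1 hz.1) (not_lt.2 hlx.le)

lemma bad_open (S : Sol n γ p x0 u) {c : ES n} {l : ℝ} (hl : 0 < l) (hlx : l < dist x0 c) :
    IsOpen (Bad γ x0 u c l) := by
  rw [isOpen_iff_mem_nhds]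
  rintro z ⟨hz, hlt⟩
  filter_upwards [good_nhds hz,
    (V_cont_z S hl hz.2.1 hz.2.2).eventually_lt (S.contAt (good_ne hlx hz)) hlt] with w a b
    using ⟨a, b⟩

lemma good_ae (hn : 0 < n) {c : ES n} {l : ℝ} (hl : 0 < l) (y : ES n) :
    ∀ᵐ z, z ∈ ball c l \ {c} → z ∈ Good x0 c l ∧ z ≠ y := by
  have : Nonempty (Fin n) := ⟨⟨0, hn⟩⟩
  have h1 : ∀ᵐ z : ES n, z ≠ y := by simp [ae_iff]
  have h2 : ∀ᵐ z : ES n, z ≠ inversion c l x0 := by simp [ae_iff]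
  filter_upwards [h1, h2] with z a b hz
  refine ⟨⟨hz.1, hz.2, ?_⟩, a⟩
  rintro rfl
  exact b (inversion_inversion c hl.ne' z).symm

lemma lip {p k M : ℝ} (hk : 0 < k) : ∃ C > 0, ∀ a b, k ≤ a → a ≤ b → b ≤ M →
    b ^ p - a ^ p ≤ C * (b - a) := by
  have hc : ContinuousOn (fun t : ℝ => p * t ^ (p - 1)) (Icc k M) := by
    intro t ht
    have : t ≠ 0 := (lt_of_lt_of_le hk ht.1).ne'
    exact (continuousAt_const.mul (Real.continuousAt_rpow_const _ _ (Or.inl this))).continuousWithinAt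
  obtain ⟨C, hC⟩ := isCompact_Icc.exists_bound_of_continuousOn hc
  refine ⟨max C 1, by positivity, fun a b ha hab hb => ?_⟩
  have := Convex.norm_image_sub_le_of_norm_hasDerivWithin_le (f := fun t : ℝ => t ^ p)
    (f' := fun t : ℝ => p * t ^ (p - 1)) (C := max C 1) (s := Icc k M) (x := a) (y := b)
    (fun t ht => (Real.hasDerivAt_rpow_const (Or.inl (lt_of_lt_of_le hk ht.1).ne')).hasDerivWithinAt)
    (fun t ht => (hC t ht).trans (le_max_left _ _)) (convex_Icc k M) ⟨ha, hab.trans hb⟩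
    ⟨ha.trans hab, hb⟩
  rw [Real.norm_eq_abs, Real.norm_eq_abs, abs_of_nonneg (sub_nonneg.2 hab)] at this
  exact (le_abs_self _).trans this

lemma cont_closedBall (S : Sol n γ p x0 u) {c : ES n} {l1 : ℝ} (hlx : l1 < dist x0 c) :
    ContinuousOn u (closedBall c l1) := by
  apply S.cont.mono
  rintro z hz rfl
  exact absurd (mem_closedBall.1 hz) (not_le.2 hlx)

lemma upper (S : Sol n γ p x0 u) {c : ES n} {l1 : ℝ} (hlx : l1 < dist x0 c) :
    ∃ M > 0, ∀ z ∈ closedBall c l1, u z ≤ M := by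
  obtain ⟨M, hM⟩ := (isCompact_closedBall c l1).exists_bound_of_continuousOn
    (cont_closedBall S hlx)
  exact ⟨max M 1, by positivity, fun z hz =>
    ((le_abs_self _).trans (hM z hz)).trans (le_max_left _ _)⟩

/-- lower bound at infinity -/
lemma lower_u (S : Sol n γ p x0 u) {c : ES n} {l1 : ℝ} (hl1 : 0 < l1) (hlx : l1 < dist x0 c) :
    ∃ k > 0, ∀ x, x ≠ x0 → k * (dist x c + l1) ^ (-γ) ≤ u x := by
  have : Nonempty (Fin n) := ⟨⟨0, S.hn⟩⟩
  have hne : (closedBall c l1).Nonempty := ⟨c, mem_closedBall_self hl1.le⟩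
  have hcp : ContinuousOn (fun z => u z ^ p) (closedBall c l1) :=
    (cont_closedBall S hlx).rpow_const (fun z _ => Or.inl (S.pos z).ne')
  obtain ⟨z0, hz0, hmin⟩ := (isCompact_closedBall c l1).exists_isMinOn hne hcp
  have hm : 0 < u z0 ^ p := Real.rpow_pos_of_pos (S.pos z0) _
  set m := u z0 ^ p
  have hv : 0 < volume.real (ball c l1) := by
    rw [Measure.real, ENNReal.toReal_pos_iff]
    exact ⟨measure_ball_pos _ _ hl1, measure_ball_lt_top⟩
  refine ⟨volume.real (ball c l1) * m, by positivity, fun x hx => ?_⟩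
  have hi := S.int x hx
  have h1 : ∫ z in ball c l1, dist x z ^ (-γ) * u z ^ p ≤ u x := by
    rw [S.eq x hx]
    refine setIntegral_le_integral hi ?_
    filter_upwards with z
    have := S.pos z
    show 0 ≤ dist x z ^ (-γ) * u z ^ p
    positivity
  refine le_trans ?_ h1
  have hae : ∀ᵐ z : ES n, z ≠ x := by simp [ae_iff]
  have h2 : ∫ z in ball c l1, (dist x c + l1) ^ (-γ) * m ≤
      ∫ z in ball c l1, dist x z ^ (-γ) * u z ^ p := by
    apply setIntegral_mono_on_ae _ hi.integrableOn measurableSet_ball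
    · filter_upwards [hae] with z hzx hz
      have hd : 0 < dist x z := dist_pos.2 hzx.symm
      have hz' : dist z c < l1 := hz
      have h3 : dist x z ≤ dist x c + l1 := by
        have := dist_triangle x c z
        rw [dist_comm c z] at this; linarith
      have h4 : m ≤ u z ^ p := hmin (ball_subset_closedBall hz)
      have h5 : (dist x c + l1) ^ (-γ) ≤ dist x z ^ (-γ) :=
        Real.rpow_le_rpow_of_nonpos hd h3 (by linarith [S.γ0])
      gcongr
    · exact integrableOn_const measure_ball_lt_top.ne
  rw [setIntegral_const, smul_eq_mul] at h2
  linarith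

lemma lower (S : Sol n γ p x0 u) {c : ES n} {l1 : ℝ} (hl1 : 0 < l1) (hlx : l1 < dist x0 c) :
    ∃ k > 0, ∀ l, 0 < l → l ≤ l1 → ∀ z ∈ Good x0 c l, k ≤ V γ u c l z := by
  obtain ⟨k, hk, H⟩ := lower_u S hl1 hlx
  refine ⟨k * (2 * l1) ^ (-γ), by positivity, fun l hl hll z hz => ?_⟩
  have hr := dist_pos.2 hz.2.1
  have hzl : dist z c < l := hz.1
  have h := H _ hz.2.2
  rw [dist_inversion_center] at h
  rw [V]
  calc k * (2 * l1) ^ (-γ) ≤ k * ((l / dist z c) ^ γ * (l ^ 2 / dist z c + l1) ^ (-γ)) := by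
        have e : (l / dist z c) ^ γ = (dist z c / l) ^ (-γ) := by
          rw [Real.rpow_neg (by positivity), ← Real.inv_rpow (by positivity), inv_div]
        rw [e, ← Real.mul_rpow (by positivity) (by positivity)]
        gcongr 1
        apply Real.rpow_le_rpow_of_nonpos (by positivity) _ (by linarith [S.γ0])
        have : dist z c / l * (l ^ 2 / dist z c + l1) = l + l1 * (dist z c / l) := by
          field_simp
        rw [this]
        have : dist z c / l ≤ 1 := by rw [div_le_one hl]; exact hzl.le
        nlinarith
    _ = (l / dist z c) ^ γ * (k * (l ^ 2 / dist z c + l1) ^ (-γ)) := by ring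
    _ ≤ _ := by gcongr

lemma improve (S : Sol n γ p x0 u) (hp0 : 0 < p) {c : ES n} {l M k C m : ℝ} (hl : 0 < l)
    (hlx : l < dist x0 c) (hM : ∀ z ∈ closedBall c l, u z ≤ M)
    (hk : ∀ z ∈ Good x0 c l, k ≤ V γ u c l z) (hC0 : 0 < C)
    (hC : ∀ a b, k ≤ a → a ≤ b → b ≤ M → b ^ p - a ^ p ≤ C * (b - a))
    (hsm : ∀ y, ∫⁻ z in Bad γ x0 u c l, ENNReal.ofReal (dist y z ^ (-γ)) ≤
      ENNReal.ofReal (1 / (2 * C)))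
    (hm : 0 ≤ m) (H : ∀ y ∈ Good x0 c l, u y - V γ u c l y ≤ m) :
    ∀ y ∈ Good x0 c l, u y - V γ u c l y ≤ m / 2 := by
  intro y hy
  obtain ⟨hi, he⟩ := repr S hl hlx hy.1 hy.2.1 hy.2.2
  have hmS : MeasurableSet (ball c l \ {c} : Set (ES n)) :=
    measurableSet_ball.diff (measurableSet_singleton c)
  have hBm := (bad_open S hl hlx).measurableSet
  have hmeas : Measurable (fun z : ES n => dist y z ^ (-γ)) :=
    (measurable_const.dist measurable_id).pow_const _
  have hnn : ∀ z : ES n, 0 ≤ dist y z ^ (-γ) := fun z => by positivity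
  have hA : IntegrableOn (fun z : ES n => dist y z ^ (-γ)) (Bad γ x0 u c l) := by
    refine ⟨hmeas.aestronglyMeasurable, ?_⟩
    rw [hasFiniteIntegral_iff_ofReal (Eventually.of_forall hnn)]
    exact lt_of_le_of_lt (hsm y) ENNReal.ofReal_lt_top
  have hAi : ∫ z in Bad γ x0 u c l, dist y z ^ (-γ) ≤ 1 / (2 * C) := by
    rw [integral_eq_lintegral_of_nonneg_ae (Eventually.of_forall hnn) hmeas.aestronglyMeasurable]
    exact ENNReal.toReal_le_of_le_ofReal (by positivity) (hsm y)
  have hind : Integrable ((Bad γ x0 u c l).indicator (fun z : ES n => dist y z ^ (-γ) * (C * m))) :=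
    (integrable_indicator_iff hBm).2 (hA.mul_const (C * m))
  have hsub : ball c l \ {c} ∩ Bad γ x0 u c l = Bad γ x0 u c l := by
    apply inter_eq_self_of_subset_right
    intro z hz; exact ⟨hz.1.1, hz.1.2.1⟩
  calc u y - V γ u c l y = _ := he
    _ ≤ ∫ z in ball c l \ {c}, (Bad γ x0 u c l).indicator
          (fun z : ES n => dist y z ^ (-γ) * (C * m)) z := by
        apply setIntegral_mono_on_ae hi hind.integrableOn hmS
        filter_upwards [good_ae (x0 := x0) S.hn (c := c) hl y] with z hz hzS
        obtain ⟨hg, hzy⟩ := hz hzS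
        have hD := D_pos S.γ0 hl hy.1 hy.2.1 hg.1 hzy
        have hDle := D_le (γ := γ) (c := c) hl (y := y) (z := z)
        have hG := G_ge S hl hg.1 hg.2.1
        have hVp := V_pos S hl hg.2.1
        by_cases hb : z ∈ Bad γ x0 u c l
        · rw [indicator_of_mem hb]
          have h1 := hC _ _ (hk z hg) hb.2.le (hM z (ball_subset_closedBall hg.1))
          have h2 := H z hg
          have h3 : u z ^ p - G γ p u c l z ≤ C * m := by nlinarith
          calc D γ c l y z * (u z ^ p - G γ p u c l z) ≤ D γ c l y z * (C * m) := by gcongr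
            _ ≤ _ := by gcongr
        · rw [indicator_of_notMem hb]
          have h1 : u z ≤ V γ u c l z := by
            by_contra hcon; exact hb ⟨hg, not_le.1 hcon⟩
          have h2 : u z ^ p ≤ V γ u c l z ^ p := Real.rpow_le_rpow (S.pos z).le h1 hp0.le
          exact mul_nonpos_of_nonneg_of_nonpos hD.le (by linarith)
    _ = (∫ z in Bad γ x0 u c l, dist y z ^ (-γ)) * (C * m) := by
        rw [setIntegral_indicator hBm, hsub, integral_mul_const]
    _ ≤ 1 / (2 * C) * (C * m) := by gcongr
    _ = m / 2 := by field_simp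

lemma small_bad (S : Sol n γ p x0 u) (hp0 : 0 < p) {c : ES n} {l1 : ℝ} (hl1 : 0 < l1)
    (hlx : l1 < dist x0 c) : ∃ δ : ENNReal, 0 < δ ∧ ∀ l, 0 < l → l ≤ l1 →
      volume (Bad γ x0 u c l) < δ → P γ x0 u c l := by
  obtain ⟨M, hM0, hM⟩ := upper S hlx
  obtain ⟨k, hk0, hk⟩ := lower S hl1 hlx
  obtain ⟨C, hC0, hC⟩ := lip (p := p) (M := M) hk0
  obtain ⟨δ, hδ, H⟩ := small_ker S.hn S.γ0 S.γn (ε := 1 / (2 * C)) (by positivity)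
  refine ⟨δ, hδ, fun l hl hll hv => ?_⟩
  have key : ∀ j : ℕ, ∀ y ∈ Good x0 c l, u y - V γ u c l y ≤ M / 2 ^ j := by
    intro j
    induction j with
    | zero =>
      intro y hy
      have h1 := hM y (closedBall_subset_closedBall hll (ball_subset_closedBall hy.1))
      have h2 := V_pos S hl hy.2.1
      simp; linarith
    | succ j ih =>
      have := improve S hp0 hl (lt_of_le_of_lt hll hlx)
        (fun z hz => hM z (closedBall_subset_closedBall hll hz)) (hk l hl hll) hC0 hC
        (fun y => (H _ hv y).le) (by positivity) ih
      intro y hy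
      have h := this y hy
      rw [pow_succ, ← div_div]; exact h
  intro y hy
  have hlim : Tendsto (fun j : ℕ => M / 2 ^ j) atTop (𝓝 0) := by
    have := (tendsto_pow_atTop_nhds_zero_of_lt_one (r := (1 / 2 : ℝ)) (by norm_num)
      (by norm_num)).const_mul M
    rw [mul_zero] at this
    refine this.congr fun j => ?_
    rw [one_div, inv_pow]; rfl
  have := ge_of_tendsto' hlim (fun j => key j y hy)
  linarith

lemma strict (S : Sol n γ p x0 u) (hp0 : 0 < p) {c : ES n} {l : ℝ} (hl : 0 < l)
    (hlx : l < dist x0 c) (hP : P γ x0 u c l) : ∀ y ∈ Good x0 c l, u y < V γ u c l y := by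
  intro y hy
  refine lt_of_le_of_ne (hP y hy) fun heq => ?_
  obtain ⟨hi, he⟩ := repr S hl hlx hy.1 hy.2.1 hy.2.2
  have hmS : MeasurableSet (ball c l \ {c} : Set (ES n)) :=
    measurableSet_ball.diff (measurableSet_singleton c)
  have hneg : ∀ z ∈ Good x0 c l, u z ^ p - G γ p u c l z ≤ 0 := by
    intro z hz
    have hG := G_ge S hl hz.1 hz.2.1
    have h2 : u z ^ p ≤ V γ u c l z ^ p := Real.rpow_le_rpow (S.pos z).le (hP z hz) hp0.le
    linarith
  have h0 : ∫ z in ball c l \ {c}, -(D γ c l y z * (u z ^ p - G γ p u c l z)) = 0 := by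
    rw [integral_neg, ← he, heq]; simp
  have hnn : 0 ≤ᵐ[volume.restrict (ball c l \ {c})]
      fun z => -(D γ c l y z * (u z ^ p - G γ p u c l z)) := by
    refine (ae_restrict_iff' hmS).2 ?_
    filter_upwards [good_ae (x0 := x0) S.hn (c := c) hl y] with z hz hzS
    obtain ⟨hg, hzy⟩ := hz hzS
    have hD := D_pos S.γ0 hl hy.1 hy.2.1 hg.1 hzy
    simp only [Pi.zero_apply]
    nlinarith [hneg z hg]
  have hz0 := (integral_eq_zero_iff_of_nonneg_ae hnn hi.neg).1 h0
  have hz1 := (ae_restrict_iff' hmS).1 hz0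
  have hae : ∀ᵐ z, z ∈ ball c l \ {c} → u z ^ p = G γ p u c l z := by
    filter_upwards [good_ae (x0 := x0) S.hn (c := c) hl y, hz1] with z hz h1 hzS
    obtain ⟨hg, hzy⟩ := hz hzS
    have hD := D_pos S.γ0 hl hy.1 hy.2.1 hg.1 hzy
    have := h1 hzS
    simp only [Pi.zero_apply, neg_eq_zero, mul_eq_zero] at this
    rcases this with h | h
    · exact absurd h hD.ne'
    · linarith
  -- a point with strict inequality
  obtain ⟨M, hM0, hM⟩ := upper S hlx
  obtain ⟨w, hw, hwM⟩ := S.sing (dist x0 c - l) (by linarith) (max M (u x0))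
  have hwx : w ≠ x0 := by
    rintro rfl; exact absurd hwM (not_lt.2 (le_max_right _ _))
  have hwM' : M < u w := lt_of_le_of_lt (le_max_left _ _) hwM
  have hwc : l < dist w c := by
    have := dist_triangle x0 w c
    rw [dist_comm x0 w] at this
    have := mem_ball.1 hw
    linarith
  have hwc' : w ∈ inversion c l '' (ball c l \ {c}) := by
    rw [image_inv c hl]; simpa using hwc
  obtain ⟨z, hz, rfl⟩ := hwc'
  have hzg : z ∈ Good x0 c l := ⟨hz.1, hz.2, hwx⟩
  have hr := dist_pos.2 hzg.2.1
  have huV : u z < V γ u c l z := by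
    rw [V]
    have h1 : 1 ≤ (l / dist z c) ^ γ := by
      apply Real.one_le_rpow _ S.γ0.le
      rw [le_div_iff₀ hr, one_mul]; exact (mem_ball.1 hzg.1).le
    have h2 := hM z (ball_subset_closedBall hzg.1)
    nlinarith
  have hlt : u z ^ p < G γ p u c l z :=
    lt_of_lt_of_le (Real.rpow_lt_rpow (S.pos z).le huV hp0) (G_ge S hl hzg.1 hzg.2.1)
  have hev : ∀ᶠ w in 𝓝 z, w ∈ ball c l \ {c} ∧ u w ^ p < G γ p u c l w := by
    filter_upwards [good_nhds hzg,
      ((S.contAt (good_ne hlx hzg)).rpow_const (Or.inl (S.pos z).ne')).eventually_lt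
        (G_cont_z S hl hzg.2.1 hzg.2.2) hlt] with w a b using ⟨⟨a.1, a.2.1⟩, b⟩
  obtain ⟨w, hw1, hw2⟩ := ((mem_closure_iff_frequently.1 (Measure.dense_of_ae hae z)).and_eventually hev).exists
  exact hw2.2.ne (hw1 hw2.1)

end RadSym


namespace RadSym
open Metric Set Filter Topology EuclideanGeometry

variable {n : ℕ} {γ p : ℝ} {x0 : ES n} {u : ES n → ℝ}

lemma small_start (S : Sol n γ p x0 u) (hp0 : 0 < p) {c : ES n} {l1 : ℝ} (hl1 : 0 < l1)
    (hlx : l1 < dist x0 c) : ∃ l, 0 < l ∧ l ≤ l1 ∧ P γ x0 u c l := by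
  have : Nonempty (Fin n) := ⟨⟨0, S.hn⟩⟩
  obtain ⟨δ, hδ, H⟩ := small_bad S hp0 hl1 hlx
  have h1 : Tendsto (fun l : ℝ => volume (Bad γ x0 u c l ∩ {z | 0 < l ∧ l ≤ l1})) (𝓝[>] 0)
      (𝓝 (volume (∅ : Set (ES n)))) := by
    refine tendsto_measure_of_ae_tendsto_indicator _ MeasurableSet.empty ?_
      (measurableSet_ball (x := c) (ε := l1)) measure_ball_lt_top.ne ?_ ?_
    · intro l
      by_cases hl : 0 < l ∧ l ≤ l1
      · simp only [hl, and_self, ofPred_true, inter_univ]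
        exact (bad_open S hl.1 (lt_of_le_of_lt hl.2 hlx)).measurableSet
      · have : {z : ES n | 0 < l ∧ l ≤ l1} = ∅ := by ext; simp; simpa using hl
        rw [this]; simp
    · filter_upwards with l
      rintro z ⟨hz, h0, h1⟩
      exact ball_subset_ball h1 hz.1.1
    · have hae : ∀ᵐ z : ES n, z ≠ c := by simp [ae_iff]
      filter_upwards [hae] with z hz
      have hr := dist_pos.2 hz
      filter_upwards [mem_nhdsWithin_of_mem_nhds (gt_mem_nhds hr)] with l hl
      simp only [mem_empty_iff_false, iff_false]
      rintro ⟨h, -⟩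
      exact absurd (mem_ball.1 h.1.1) (not_lt.2 (le_of_lt hl))
  rw [measure_empty] at h1
  have h2 := h1.eventually_lt_const hδ
  have h3 : ∀ᶠ l in 𝓝[>] (0 : ℝ), 0 < l ∧ l ≤ l1 :=
    by filter_upwards [Ioc_mem_nhdsGT hl1] with l hl using hl
  obtain ⟨l, h2, h3⟩ := (h2.and h3).exists
  refine ⟨l, h3.1, h3.2, H l h3.1 h3.2 ?_⟩
  simpa [h3] using h2

lemma open_step (S : Sol n γ p x0 u) (hp0 : 0 < p) {c : ES n} {l l1 : ℝ} (hl : 0 < l) (hll : l < l1)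
    (hlx : l1 < dist x0 c) (hP : P γ x0 u c l) : ∀ᶠ l' in 𝓝[>] l, P γ x0 u c l' := by
  have : Nonempty (Fin n) := ⟨⟨0, S.hn⟩⟩
  have hl1 := hl.trans hll
  obtain ⟨δ, hδ, H⟩ := small_bad S hp0 hl1 hlx
  have h1 : Tendsto (fun l : ℝ => volume (Bad γ x0 u c l ∩ {z | 0 < l ∧ l ≤ l1})) (𝓝[>] l)
      (𝓝 (volume (∅ : Set (ES n)))) := by
    refine tendsto_measure_of_ae_tendsto_indicator _ MeasurableSet.empty ?_
      (measurableSet_ball (x := c) (ε := l1)) measure_ball_lt_top.ne ?_ ?_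
    · intro l
      by_cases hl : 0 < l ∧ l ≤ l1
      · simp only [hl, and_self, ofPred_true, inter_univ]
        exact (bad_open S hl.1 (lt_of_le_of_lt hl.2 hlx)).measurableSet
      · have : {z : ES n | 0 < l ∧ l ≤ l1} = ∅ := by ext; simp; simpa using hl
        rw [this]; simp
    · filter_upwards with l
      rintro z ⟨hz, h0, h1⟩
      exact ball_subset_ball h1 hz.1.1
    · have hae : ∀ᵐ z : ES n, z ≠ c := by simp [ae_iff]
      have hsph : ∀ᵐ z : ES n, z ∉ sphere c l :=
        measure_eq_zero_iff_ae_notMem.1 (Measure.addHaar_sphere _ c l)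
      filter_upwards [hae, hsph, good_ae (x0 := x0) S.hn (c := c) hl c] with z hz hzs hzg
      have hr := dist_pos.2 hz
      have hzs2 : dist z c ≠ l := fun h => hzs h
      rcases lt_or_gt_of_ne hzs2 with h | h
      · have hg := (hzg ⟨h, hz⟩).1
        have hs := strict S hp0 hl (hll.trans hlx) hP z hg
        have := (V_cont_l S hl hz hg.2.2).eventually (lt_mem_nhds hs)
        filter_upwards [mem_nhdsWithin_of_mem_nhds this] with l' hl'
        simp only [mem_empty_iff_false, iff_false]
        rintro ⟨h, -⟩
        exact absurd h.2 (not_lt.2 (le_of_lt hl'))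
      · filter_upwards [mem_nhdsWithin_of_mem_nhds (gt_mem_nhds h)] with l hl
        simp only [mem_empty_iff_false, iff_false]
        rintro ⟨h, -⟩
        exact absurd (mem_ball.1 h.1.1) (not_lt.2 (le_of_lt hl))
  rw [measure_empty] at h1
  have h2 := h1.eventually_lt_const hδ
  have h3 : ∀ᶠ l' in 𝓝[>] l, 0 < l' ∧ l' ≤ l1 := by
    filter_upwards [Ioc_mem_nhdsGT hll] with l' hl' using ⟨hl.trans hl'.1, hl'.2⟩
  filter_upwards [h2, h3] with l' h2 h3
  refine H l' h3.1 h3.2 ?_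
  simpa [h3] using h2

lemma closed_step (S : Sol n γ p x0 u) {c : ES n} {a b : ℝ} (ha : 0 < a) :
    IsClosed ({l | P γ x0 u c l} ∩ Icc a b) := by
  rw [← isSeqClosed_iff_isClosed]
  intro s l hs hlim
  have hl : l ∈ Icc a b := isClosed_Icc.mem_of_tendsto hlim (Eventually.of_forall fun j => (hs j).2)
  refine ⟨fun z hz => ?_, hl⟩
  have h1 := (V_cont_l S (lt_of_lt_of_le ha hl.1) hz.2.1 hz.2.2).tendsto.comp hlim
  refine ge_of_tendsto h1 ?_
  filter_upwards [hlim.eventually (good_nhds_l hz)] with j hj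
  exact (hs j).1 z hj

lemma moving (S : Sol n γ p x0 u) (hp0 : 0 < p) {c : ES n} {l : ℝ} (hl : 0 < l)
    (hlx : l < dist x0 c) : P γ x0 u c l := by
  obtain ⟨a, ha, hal, hPa⟩ := small_start S hp0 hl hlx
  have := (closed_step S (c := c) (b := l) ha).Icc_subset_of_forall_mem_nhdsWithin hPa
    (fun x hx => open_step S hp0 (lt_of_lt_of_le ha hx.2.1) hx.2.2 hlx hx.1)
  exact this ⟨hal, le_rfl⟩

lemma ineq_t (S : Sol n γ p x0 u) (hp0 : 0 < p) {x₁ x₂ : ES n} (h : dist x₁ x0 = dist x₂ x0)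
    (hne : x₁ ≠ x₂) {t : ℝ} (ht : 0 < t) : u x₁ ≤ (Real.sqrt (1 + 1 / t)) ^ γ * u x₂ := by
  have hd := dist_pos.2 hne
  set c := x₁ + t • (x₁ - x₂) with hc
  have h1c : x₁ - c = (-t) • (x₁ - x₂) := by rw [hc, neg_smul]; abel
  have h2c : x₂ - c = (-(1 + t)) • (x₁ - x₂) := by rw [hc, neg_smul, add_smul, one_smul]; abel
  have d1 : dist x₁ c = t * dist x₁ x₂ := by
    rw [dist_eq_norm, h1c, norm_smul, dist_eq_norm]; simp [abs_of_pos ht]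
  set l := Real.sqrt (t * (1 + t)) * dist x₁ x₂ with hl
  have hs : 0 < Real.sqrt (t * (1 + t)) := by positivity
  have hl0 : 0 < l := by positivity
  have hsq : Real.sqrt (t * (1 + t)) ^ 2 = t * (1 + t) := Real.sq_sqrt (by positivity)
  have hx1 : x₁ ≠ c := by
    rw [← dist_pos, d1]; positivity
  have hl2 : l ^ 2 = t * (1 + t) * dist x₁ x₂ ^ 2 := by rw [hl, mul_pow, hsq]
  have hρ : 0 < dist x₁ x0 := by
    rw [dist_pos]
    rintro rfl
    rw [dist_self] at h
    exact hne (dist_eq_zero.1 h.symm).symm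
  have hlx : l < dist x0 c := by
    refine lt_of_pow_lt_pow_left₀ 2 dist_nonneg ?_
    have e1 : c - x0 = (1 + t) • (x₁ - x0) - t • (x₂ - x0) := by
      rw [hc, add_smul, one_smul, smul_sub, smul_sub, smul_sub]; abel
    have e2 : dist x0 c ^ 2 = (1 + t) ^ 2 * dist x₁ x0 ^ 2 - 2 * ((1 + t) * t * inner ℝ (x₁ - x0) (x₂ - x0))
        + t ^ 2 * dist x₂ x0 ^ 2 := by
      rw [dist_comm, dist_eq_norm, e1, norm_sub_sq_real, norm_smul, norm_smul, inner_smul_left,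
        inner_smul_right, mul_pow, mul_pow, dist_eq_norm, dist_eq_norm]
      simp; ring
    have e3 : dist x₁ x₂ ^ 2 = dist x₁ x0 ^ 2 - 2 * inner ℝ (x₁ - x0) (x₂ - x0) + dist x₂ x0 ^ 2 := by
      rw [dist_eq_norm, dist_eq_norm, dist_eq_norm, ← norm_sub_sq_real]; congr 2; abel
    rw [hl2, e2, e3, ← h]
    nlinarith [sq_pos_of_pos hρ]
  have hst : t < Real.sqrt (t * (1 + t)) := by
    apply Real.lt_sqrt_of_sq_lt; nlinarith
  have hq : (l / dist x₁ c) ^ 2 = (1 + t) / t := by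
    rw [div_pow, hl2, d1]; field_simp
  have hinv : inversion c l x₁ = x₂ := by
    rw [inversion, hq]
    simp only [vsub_eq_sub, vadd_eq_add]
    rw [h1c, smul_smul, show (1 + t) / t * -t = -(1 + t) by field_simp, ← h2c]; abel
  have hx2 : x₂ ≠ x0 := by
    rw [← dist_pos, ← h]; exact hρ
  have := moving S hp0 hl0 hlx x₁ ⟨by rw [mem_ball, d1, hl]; gcongr, hx1, by rw [hinv]; exact hx2⟩
  rw [V, hinv] at this
  convert this using 3
  rw [show 1 + 1 / t = (1 + t) / t by field_simp; ring, ← hq, Real.sqrt_sq (by positivity)]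

lemma ineq (S : Sol n γ p x0 u) (hp0 : 0 < p) {x₁ x₂ : ES n} (h : dist x₁ x0 = dist x₂ x0) :
    u x₁ ≤ u x₂ := by
  by_cases hne : x₁ = x₂
  · rw [hne]
  have h1 : Tendsto (fun t : ℝ => (Real.sqrt (1 + 1 / t)) ^ γ * u x₂) atTop
      (𝓝 ((Real.sqrt (1 + 0)) ^ γ * u x₂)) := by
    have h0 : Tendsto (fun t : ℝ => 1 / t) atTop (𝓝 0) := by
      simpa using tendsto_inv_atTop_zero (𝕜 := ℝ)
    exact (((h0.const_add 1).sqrt).rpow_const (Or.inr S.γ0.le)).mul_const _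
  simp only [add_zero, Real.sqrt_one, Real.one_rpow, one_mul] at h1
  refine ge_of_tendsto h1 ?_
  filter_upwards [eventually_gt_atTop 0] with t ht using ineq_t S hp0 h hne ht

/-! ### the case `p ≤ 0`: no solution -/

lemma scale_ker (hn : 0 < n) (hγn : γ < n) {R : ℝ} (hR : 0 < R) :
    ∫⁻ z in ball (0 : ES n) R, ENNReal.ofReal (‖z‖ ^ (-γ)) =
      ENNReal.ofReal ((∫ z in ball (0 : ES n) 1, ‖z‖ ^ (-γ)) * R ^ ((n : ℝ) - γ)) := by
  rw [← ofReal_integral_eq_lintegral_ofReal (ker_int hn hγn R)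
    (Eventually.of_forall fun z => by positivity)]
  congr 1
  have h := Measure.setIntegral_comp_smul_of_pos (volume : Measure (ES n))
    (fun z : ES n => ‖z‖ ^ (-γ)) (ball 0 1) hR
  rw [_root_.smul_unitBall_of_pos hR] at h
  have e : ∀ z : ES n, ‖R • z‖ ^ (-γ) = R ^ (-γ) * ‖z‖ ^ (-γ) := by
    intro z
    rw [norm_smul, Real.norm_of_nonneg hR.le, Real.mul_rpow hR.le (norm_nonneg _)]
  simp_rw [e] at h
  rw [integral_const_mul, smul_eq_mul] at h
  simp only [finrank_euclideanSpace, Fintype.card_fin] at h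
  rw [sub_eq_add_neg, Real.rpow_add hR, Real.rpow_natCast]
  have : (R ^ n) ≠ 0 := by positivity
  field_simp at h
  linarith

lemma vol_ball (hn : 0 < n) : ∃ ω : ℝ, 0 < ω ∧ ∀ (a : ES n) (R : ℝ), 0 < R →
    volume (ball a R) = ENNReal.ofReal (ω * R ^ n) := by
  have : Nonempty (Fin n) := ⟨⟨0, hn⟩⟩
  have hω : 0 < (volume (ball (0 : ES n) 1)).toReal := by
    rw [ENNReal.toReal_pos_iff]
    exact ⟨measure_ball_pos _ _ one_pos, measure_ball_lt_top⟩
  refine ⟨_, hω, fun a R hR => ?_⟩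
  rw [Measure.addHaar_ball _ _ hR.le, mul_comm, ENNReal.ofReal_mul hω.le,
    ENNReal.ofReal_toReal measure_ball_lt_top.ne]
  simp

/-- Uniform bound for the potential of a ball. -/
lemma pot_ball (hn : 0 < n) (hγ0 : 0 < γ) (hγn : γ < n) : ∃ C : ℝ, 0 < C ∧ ∀ R > 0, ∀ a v : ES n,
    ∫⁻ x in ball a R, ENNReal.ofReal (dist x v ^ (-γ)) ≤ ENNReal.ofReal (C * R ^ ((n : ℝ) - γ)) := by
  have : Nonempty (Fin n) := ⟨⟨0, hn⟩⟩
  set C0 := ∫ z in ball (0 : ES n) 1, ‖z‖ ^ (-γ)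
  have hC0 : 0 ≤ C0 := integral_nonneg fun z => by positivity
  obtain ⟨ω, hω, hvolω⟩ := vol_ball (n := n) hn
  refine ⟨C0 + ω, by positivity, fun R hR a v => ?_⟩
  have hmp : MeasurePreserving (fun z : ES n => z - v) volume volume :=
    measurePreserving_sub_right volume v
  have hemb : MeasurableEmbedding (fun z : ES n => z - v) :=
    (Homeomorph.subRight v).measurableEmbedding
  have hvol := hvolω a R hR
  have h1 : ∫⁻ x in ball v R, ENNReal.ofReal (dist x v ^ (-γ)) = ENNReal.ofReal (C0 * R ^ ((n : ℝ) - γ)) := by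
    rw [← scale_ker hn hγn hR,
      ← hmp.setLIntegral_comp_preimage_emb hemb (fun z => ENNReal.ofReal (‖z‖ ^ (-γ))) (ball 0 R)]
    have hpre : (fun z : ES n => z - v) ⁻¹' ball 0 R = ball v R := by
      ext x; simp [dist_eq_norm]
    rw [hpre]
    simp only [dist_eq_norm]
  calc ∫⁻ x in ball a R, ENNReal.ofReal (dist x v ^ (-γ))
      ≤ ∫⁻ x in ball v R ∪ (ball a R \ ball v R), ENNReal.ofReal (dist x v ^ (-γ)) :=
        lintegral_mono_set (by intro x hx; by_cases h : x ∈ ball v R <;> simp_all)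
    _ ≤ (∫⁻ x in ball v R, ENNReal.ofReal (dist x v ^ (-γ))) +
        ∫⁻ x in ball a R \ ball v R, ENNReal.ofReal (dist x v ^ (-γ)) := lintegral_union_le _ _ _
    _ ≤ ENNReal.ofReal (C0 * R ^ ((n : ℝ) - γ)) + ENNReal.ofReal (R ^ (-γ)) * volume (ball a R) := by
        rw [h1]
        gcongr
        calc ∫⁻ x in ball a R \ ball v R, ENNReal.ofReal (dist x v ^ (-γ))
            ≤ ∫⁻ x in ball a R \ ball v R, ENNReal.ofReal (R ^ (-γ)) := by
              apply setLIntegral_mono' (measurableSet_ball.diff measurableSet_ball)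
              intro x hx
              apply ENNReal.ofReal_le_ofReal
              apply Real.rpow_le_rpow_of_nonpos hR _ (by linarith)
              simpa using hx.2
          _ = ENNReal.ofReal (R ^ (-γ)) * volume (ball a R \ ball v R) := by simp
          _ ≤ _ := by gcongr; exact sdiff_subset
    _ = ENNReal.ofReal ((C0 + ω) * R ^ ((n : ℝ) - γ)) := by
        rw [hvol, ← ENNReal.ofReal_mul (by positivity), ← ENNReal.ofReal_add (by positivity) (by positivity)]
        congr 1
        rw [sub_eq_add_neg, Real.rpow_add hR, Real.rpow_natCast]; ring

lemma tri_pow (hγ0 : 0 < γ) {R : ℝ} (hR : 0 < R) {a x y : ES n} (hx : dist x a < R) (hya : y ≠ a)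
    (hxy : x ≠ y) : dist x y ^ (-γ) ≤ 2 ^ γ * dist a y ^ (-γ) * (1 + R ^ γ * dist x y ^ (-γ)) := by
  have hd := dist_pos.2 hya.symm
  have hd2 := dist_pos.2 hxy
  have htri := dist_triangle a x y
  rw [dist_comm a x] at htri
  have e : 2 ^ γ * dist a y ^ (-γ) = (dist a y / 2) ^ (-γ) := by
    rw [Real.div_rpow hd.le (by norm_num), Real.rpow_neg (by norm_num : (0 : ℝ) ≤ 2)]
    field_simp
  rw [e]
  by_cases h : dist a y / 2 ≤ dist x y
  · have : dist x y ^ (-γ) ≤ (dist a y / 2) ^ (-γ) :=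
      Real.rpow_le_rpow_of_nonpos (by positivity) h (by linarith)
    have h2 : 0 ≤ R ^ γ * dist x y ^ (-γ) := by positivity
    have h3 : 0 ≤ (dist a y / 2) ^ (-γ) := by positivity
    nlinarith
  · have h1 : dist a y / 2 ≤ R := by linarith
    have : 1 ≤ (dist a y / 2) ^ (-γ) * R ^ γ := by
      have : R ^ (-γ) ≤ (dist a y / 2) ^ (-γ) :=
        Real.rpow_le_rpow_of_nonpos (by positivity) h1 (by linarith)
      calc 1 = R ^ (-γ) * R ^ γ := by rw [← Real.rpow_add hR]; simp
        _ ≤ _ := by gcongr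
    have h2 : 0 ≤ dist x y ^ (-γ) := by positivity
    have h3 : 0 ≤ (dist a y / 2) ^ (-γ) := by positivity
    nlinarith

lemma pot_ball2 (hn : 0 < n) (hγ0 : 0 < γ) (hγn : γ < n) : ∃ C : ℝ, 0 < C ∧ ∀ R > 0, ∀ a y : ES n,
    y ≠ a → ∫⁻ x in ball a R, ENNReal.ofReal (dist x y ^ (-γ)) ≤
      ENNReal.ofReal (C * R ^ n) * ENNReal.ofReal (dist a y ^ (-γ)) := by
  have : Nonempty (Fin n) := ⟨⟨0, hn⟩⟩
  obtain ⟨C, hC, H⟩ := pot_ball hn hγ0 hγn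
  obtain ⟨ω, hω, hvolω⟩ := vol_ball (n := n) hn
  refine ⟨2 ^ γ * (ω + C), by positivity, fun R hR a y hya => ?_⟩
  have hvol := hvolω a R hR
  have hae : ∀ᵐ x : ES n, x ≠ y := by simp [ae_iff]
  have hmeas : Measurable (fun x : ES n => ENNReal.ofReal (dist x y ^ (-γ))) :=
    ((measurable_id.dist measurable_const).pow_const _).ennreal_ofReal
  calc ∫⁻ x in ball a R, ENNReal.ofReal (dist x y ^ (-γ))
      ≤ ∫⁻ x in ball a R, ENNReal.ofReal (2 ^ γ * dist a y ^ (-γ)) *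
          (1 + ENNReal.ofReal (R ^ γ) * ENNReal.ofReal (dist x y ^ (-γ))) := by
        apply setLIntegral_mono_ae' measurableSet_ball
        filter_upwards [hae] with x hx hxa
        rw [← ENNReal.ofReal_mul (by positivity), ← ENNReal.ofReal_one,
          ← ENNReal.ofReal_add (by positivity) (by positivity), ← ENNReal.ofReal_mul (by positivity)]
        exact ENNReal.ofReal_le_ofReal (tri_pow hγ0 hR hxa hya hx)
    _ = ENNReal.ofReal (2 ^ γ * dist a y ^ (-γ)) * (volume (ball a R) +
          ENNReal.ofReal (R ^ γ) * ∫⁻ x in ball a R, ENNReal.ofReal (dist x y ^ (-γ))) := by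
        rw [lintegral_const_mul' _ _ ENNReal.ofReal_ne_top,
          lintegral_add_left measurable_const, lintegral_const_mul _ hmeas]
        simp
    _ ≤ ENNReal.ofReal (2 ^ γ * dist a y ^ (-γ)) * (ENNReal.ofReal (ω * R ^ n) +
          ENNReal.ofReal (R ^ γ) * ENNReal.ofReal (C * R ^ ((n : ℝ) - γ))) := by
        rw [hvol]; gcongr; exact H R hR a y
    _ = _ := by
        rw [← ENNReal.ofReal_mul (by positivity), ← ENNReal.ofReal_add (by positivity) (by positivity),
          ← ENNReal.ofReal_mul (by positivity), ← ENNReal.ofReal_mul (by positivity)]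
        congr 1
        rw [Real.rpow_sub hR, Real.rpow_natCast]
        field_simp

lemma swap_ker {w : ES n → ENNReal} (hw : Measurable w) (a : ES n) (R : ℝ) :
    ∫⁻ x in ball a R, ∫⁻ y, ENNReal.ofReal (dist x y ^ (-γ)) * w y =
      ∫⁻ y, (∫⁻ x in ball a R, ENNReal.ofReal (dist x y ^ (-γ))) * w y := by
  have hkm : Measurable (fun q : ES n × ES n => ENNReal.ofReal (dist q.1 q.2 ^ (-γ))) :=
    ((measurable_fst.dist measurable_snd).pow_const _).ennreal_ofReal
  have hm : Measurable (fun q : ES n × ES n => ENNReal.ofReal (dist q.1 q.2 ^ (-γ)) * w q.2) :=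
    hkm.mul (hw.comp measurable_snd)
  rw [lintegral_lintegral_swap (f := fun x y => ENNReal.ofReal (dist x y ^ (-γ)) * w y)
    hm.aemeasurable]
  refine lintegral_congr fun y => ?_
  have hk : Measurable (fun x : ES n => ENNReal.ofReal (dist x y ^ (-γ))) :=
    ((measurable_id.dist measurable_const).pow_const _).ennreal_ofReal
  exact lintegral_mul_const _ hk

set_option maxHeartbeats 600000 in
lemma no_sol (S : Sol n γ p x0 u) (hp0 : p ≤ 0) : False := by
  have : Nonempty (Fin n) := ⟨⟨0, S.hn⟩⟩
  obtain ⟨a, ha⟩ := exists_ne x0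
  obtain ⟨C, hC, H⟩ := pot_ball2 S.hn S.γ0 S.γn
  obtain ⟨ω, hω, hvolω⟩ := vol_ball (n := n) S.hn
  have hum : Measurable u := measurable_of_continuousOn_compl_singleton x0 S.cont
  have hupm : Measurable (fun y => ENNReal.ofReal (u y ^ p)) := (hum.pow_const p).ennreal_ofReal
  have hueq : ∀ x, x ≠ x0 → ENNReal.ofReal (u x) =
      ∫⁻ y, ENNReal.ofReal (dist x y ^ (-γ)) * ENNReal.ofReal (u y ^ p) := by
    intro x hx
    rw [S.eq x hx, ofReal_integral_eq_lintegral_ofReal (S.int x hx)]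
    · congr 1; ext y; rw [ENNReal.ofReal_mul (by positivity)]
    · filter_upwards with y
      have := S.pos y
      show 0 ≤ dist x y ^ (-γ) * u y ^ p
      positivity
  have hJ := hueq a ha
  have hua := S.pos a
  have main : ∀ R > 0, ∀ M > 0, ω * R ^ n ≤ C * R ^ n * u a / M + M ^ (-p) * (R ^ γ * u a) := by
    intro R hR M hM
    have hvol := hvolω a R hR
    have hne0 : ∀ᵐ x : ES n, x ≠ x0 := by simp [ae_iff]
    have hnea : ∀ᵐ x : ES n, x ≠ a := by simp [ae_iff]
    have s1 : ∫⁻ x in ball a R, ENNReal.ofReal (u x) ≤ ENNReal.ofReal (C * R ^ n * u a) := by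
      calc ∫⁻ x in ball a R, ENNReal.ofReal (u x)
          = ∫⁻ x in ball a R, ∫⁻ y, ENNReal.ofReal (dist x y ^ (-γ)) * ENNReal.ofReal (u y ^ p) := by
            apply setLIntegral_congr_fun_ae measurableSet_ball
            filter_upwards [hne0] with x hx _ using hueq x hx
        _ = ∫⁻ y, (∫⁻ x in ball a R, ENNReal.ofReal (dist x y ^ (-γ))) * ENNReal.ofReal (u y ^ p) :=
            swap_ker hupm a R
        _ ≤ ∫⁻ y, ENNReal.ofReal (C * R ^ n) * (ENNReal.ofReal (dist a y ^ (-γ)) * ENNReal.ofReal (u y ^ p)) := by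
            apply lintegral_mono_ae
            filter_upwards [hnea] with y hy
            rw [← mul_assoc]
            exact mul_le_mul_left (H R hR a y hy) _
        _ = ENNReal.ofReal (C * R ^ n) * ENNReal.ofReal (u a) := by
            rw [lintegral_const_mul', ← hJ]
            exact ENNReal.ofReal_ne_top
        _ = _ := by rw [← ENNReal.ofReal_mul (by positivity)]
    have s2 : ∫⁻ x in ball a R, ENNReal.ofReal (u x ^ p) ≤ ENNReal.ofReal (R ^ γ * u a) := by
      calc ∫⁻ x in ball a R, ENNReal.ofReal (u x ^ p)
          ≤ ∫⁻ x in ball a R, ENNReal.ofReal (R ^ γ) * (ENNReal.ofReal (dist a x ^ (-γ)) * ENNReal.ofReal (u x ^ p)) := by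
            apply setLIntegral_mono_ae' measurableSet_ball
            filter_upwards [hnea] with x hx hxa
            rw [← mul_assoc, ← ENNReal.ofReal_mul (by positivity)]
            have hd := dist_pos.2 hx.symm
            have hxa' : dist a x < R := by rw [dist_comm]; exact hxa
            have : 1 ≤ R ^ γ * dist a x ^ (-γ) := by
              rw [Real.rpow_neg hd.le, ← div_eq_mul_inv, le_div_iff₀ (by positivity), one_mul]
              exact Real.rpow_le_rpow hd.le hxa'.le S.γ0.le
            calc ENNReal.ofReal (u x ^ p) = 1 * ENNReal.ofReal (u x ^ p) := (one_mul _).symm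
              _ ≤ _ := by gcongr; exact ENNReal.one_le_ofReal.2 this
        _ ≤ ∫⁻ x, ENNReal.ofReal (R ^ γ) * (ENNReal.ofReal (dist a x ^ (-γ)) * ENNReal.ofReal (u x ^ p)) :=
            setLIntegral_le_lintegral _ _
        _ = ENNReal.ofReal (R ^ γ) * ENNReal.ofReal (u a) := by
            rw [lintegral_const_mul', ← hJ]
            exact ENNReal.ofReal_ne_top
        _ = _ := by rw [← ENNReal.ofReal_mul (by positivity)]
    have s3 : ENNReal.ofReal (ω * R ^ n) ≤
        ENNReal.ofReal (C * R ^ n * u a / M + M ^ (-p) * (R ^ γ * u a)) := by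
      calc ENNReal.ofReal (ω * R ^ n) = ∫⁻ x in ball a R, 1 := by rw [← hvol]; simp
        _ ≤ ∫⁻ x in ball a R, (ENNReal.ofReal (1 / M) * ENNReal.ofReal (u x) +
              ENNReal.ofReal (M ^ (-p)) * ENNReal.ofReal (u x ^ p)) := by
            apply lintegral_mono
            intro x
            have hux := S.pos x
            show 1 ≤ ENNReal.ofReal (1 / M) * ENNReal.ofReal (u x) +
              ENNReal.ofReal (M ^ (-p)) * ENNReal.ofReal (u x ^ p)
            rw [← ENNReal.ofReal_mul (by positivity), ← ENNReal.ofReal_mul (by positivity),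
              ← ENNReal.ofReal_add (by positivity) (by positivity), ENNReal.one_le_ofReal]
            by_cases h : M ≤ u x
            · have : 1 ≤ 1 / M * u x := by
                rw [one_div, inv_mul_eq_div, le_div_iff₀ hM, one_mul]; exact h
              have : 0 ≤ M ^ (-p) * u x ^ p := by positivity
              linarith
            · have h1 : M ^ p ≤ u x ^ p := Real.rpow_le_rpow_of_nonpos hux (not_le.1 h).le hp0
              have h2 : 1 ≤ M ^ (-p) * u x ^ p := by
                calc 1 = M ^ (-p) * M ^ p := by rw [← Real.rpow_add hM]; simp
                  _ ≤ _ := by gcongr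
              have : 0 ≤ 1 / M * u x := by positivity
              linarith
        _ = ENNReal.ofReal (1 / M) * (∫⁻ x in ball a R, ENNReal.ofReal (u x)) +
              ENNReal.ofReal (M ^ (-p)) * ∫⁻ x in ball a R, ENNReal.ofReal (u x ^ p) := by
            rw [lintegral_add_left (hum.ennreal_ofReal.const_mul _),
              lintegral_const_mul _ hum.ennreal_ofReal, lintegral_const_mul _ hupm]
        _ ≤ ENNReal.ofReal (1 / M) * ENNReal.ofReal (C * R ^ n * u a) +
              ENNReal.ofReal (M ^ (-p)) * ENNReal.ofReal (R ^ γ * u a) := by gcongr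
        _ = _ := by
            rw [← ENNReal.ofReal_mul (by positivity), ← ENNReal.ofReal_mul (by positivity),
              ← ENNReal.ofReal_add (by positivity) (by positivity)]
            congr 1; ring
    exact (ENNReal.ofReal_le_ofReal_iff (by positivity)).1 s3
  set M := 2 * C * u a / ω with hMdef
  have hM : 0 < M := by positivity
  have h2 : ∀ R > 0, ω / 2 * R ^ ((n : ℝ) - γ) ≤ M ^ (-p) * u a := by
    intro R hR
    have h := main R hR M hM
    have e : C * R ^ n * u a / M = ω / 2 * R ^ n := by rw [hMdef]; field_simp
    rw [e] at h
    rw [Real.rpow_sub hR, Real.rpow_natCast, ← mul_div_assoc, div_le_iff₀ (by positivity)]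
    linarith
  have h3 : Tendsto (fun R : ℝ => ω / 2 * R ^ ((n : ℝ) - γ)) atTop atTop :=
    (tendsto_rpow_atTop (by linarith [S.γn])).const_mul_atTop (by positivity)
  obtain ⟨R, hR1, hR2⟩ := ((h3.eventually_gt_atTop (M ^ (-p) * u a)).and (eventually_gt_atTop 0)).exists
  exact absurd (h2 R hR2) (not_le.2 hR1)

end RadSym

theorem radial_symmetry_of_singular_solution
    (n : ℕ) (hn : 0 < n) (α p : ℝ) (hα0 : 0 < α) (hαn : α < n)
    (hp : p ≤ (n + α) / (n - α))
    (x0 : EuclideanSpace ℝ (Fin n)) (u : EuclideanSpace ℝ (Fin n) → ℝ)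
    (hpos : ∀ x, 0 < u x)
    (hcont : ContinuousOn u {x0}ᶜ)
    (hsing : ∀ ε > (0 : ℝ), ∀ M : ℝ, ∃ x ∈ Metric.ball x0 ε, M < u x)
    (heq : ∀ x ≠ x0, u x = ∫ y : EuclideanSpace ℝ (Fin n),
      ‖x - y‖ ^ (-((n : ℝ) - α)) * u y ^ p) :
    ∀ x₁ x₂, ‖x₁ - x0‖ = ‖x₂ - x0‖ → u x₁ = u x₂ := by
  have S : RadSym.Sol n ((n : ℝ) - α) p x0 u := by
    refine ⟨hn, by linarith, by linarith, ?_, hpos, hcont, hsing, fun x hx => ?_, fun x hx => ?_⟩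
    · rw [le_div_iff₀ (by linarith)] at hp; linarith
    · by_contra hcon
      simp_rw [dist_eq_norm] at hcon
      have := heq x hx
      rw [integral_undef hcon] at this
      exact (hpos x).ne' this
    · simp_rw [dist_eq_norm]; exact heq x hx
  intro x₁ x₂ h
  rw [← dist_eq_norm, ← dist_eq_norm] at h
  rcases le_or_gt p 0 with hp0 | hp0
  · exact (RadSym.no_sol S hp0).elim
  · exact le_antisymm (RadSym.ineq S hp0 h) (RadSym.ineq S hp0 h.symm)
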